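/- Let m, n be natural numbers. The map αmax : {0,…,m+n} → {0,…,m} given by αmax(i) = min(i, m), together with α'max(i) = i − min(i, m), is an (m,n)-shuffle, and it is the greatest element of the poset of (m,n)-shuffles. Moreover, an (m,n)-shuffle ⟨α,α'⟩ satisfies ⌜⟨α,α'⟩ = ∅ if and only if ⟨α,α'⟩ is this maximum shuffle. -/

import Mathlib

/-- Extend a map `Fin (N+1) → Fin (M+1)` to a `ℕ`-valued map on all of `ℕ`,
clamping the input to the range `{0, …, N}`. -/
def extendFin {N M : ℕ} (f : Fin (N + 1) → Fin (M + 1)) (i : ℕ) : ℕ :=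
  (f ⟨min i N, Nat.lt_succ_of_le (min_le_right i N)⟩ : ℕ)

/-- `⟨α, α'⟩` is an `(m,n)`-shuffle: both maps are monotone surjections and
`α i + α' i = i` for all `i`. -/
def IsShuffle (m n : ℕ) (α : Fin (m + n + 1) → Fin (m + 1))
    (α' : Fin (m + n + 1) → Fin (n + 1)) : Prop :=
  Monotone α ∧ Monotone α' ∧ Function.Surjective α ∧ Function.Surjective α' ∧
    ∀ i : Fin (m + n + 1), (α i : ℕ) + (α' i : ℕ) = (i : ℕ)

/-- The pointwise order on `(m,n)`-shuffles (a shuffle is determined by its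
first component). -/
def ShuffleLE (m n : ℕ) (α β : Fin (m + n + 1) → Fin (m + 1)) : Prop :=
  ∀ i, α i ≤ β i

/-- The strict pointwise order on `(m,n)`-shuffles. -/
def ShuffleLT (m n : ℕ) (α β : Fin (m + n + 1) → Fin (m + 1)) : Prop :=
  ShuffleLE m n α β ∧ α ≠ β

/-- The lower-right corner set `⌞⟨α,α'⟩`: all `i` with `1 ≤ i ≤ m+n-1` such that
`α(i+1) = α(i) = α(i-1)+1`. -/
def lrCorner (m n : ℕ) (α : Fin (m + n + 1) → Fin (m + 1)) : Set ℕ :=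
  {i | 1 ≤ i ∧ i + 1 ≤ m + n ∧
    extendFin α (i + 1) = extendFin α i ∧ extendFin α i = extendFin α (i - 1) + 1}

/-- The upper-left corner set `⌜⟨α,α'⟩`: all `i` with `1 ≤ i ≤ m+n-1` such that
`α(i+1) = α(i)+1 = α(i-1)+1`. -/
def ulCorner (m n : ℕ) (α : Fin (m + n + 1) → Fin (m + 1)) : Set ℕ :=
  {i | 1 ≤ i ∧ i + 1 ≤ m + n ∧
    extendFin α (i + 1) = extendFin α i + 1 ∧ extendFin α i = extendFin α (i - 1)}

/-- `⟨β,β'⟩` is an immediate predecessor of `⟨α,α'⟩`: it is a shuffle, `β < α`,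
and no shuffle lies strictly between them. -/
def IsImmPred (m n : ℕ)
    (β : Fin (m + n + 1) → Fin (m + 1)) (β' : Fin (m + n + 1) → Fin (n + 1))
    (α : Fin (m + n + 1) → Fin (m + 1)) (α' : Fin (m + n + 1) → Fin (n + 1)) : Prop :=
  IsShuffle m n β β' ∧ ShuffleLT m n β α ∧
    ∀ (γ : Fin (m + n + 1) → Fin (m + 1)) (γ' : Fin (m + n + 1) → Fin (n + 1)),
      IsShuffle m n γ γ' → ¬ (ShuffleLT m n β γ ∧ ShuffleLT m n γ α)

/-- `⟨γ,γ'⟩` is an immediate successor of `⟨α,α'⟩`: it is a shuffle, `α < γ`,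
and no shuffle lies strictly between them. -/
def IsImmSucc (m n : ℕ)
    (γ : Fin (m + n + 1) → Fin (m + 1)) (γ' : Fin (m + n + 1) → Fin (n + 1))
    (α : Fin (m + n + 1) → Fin (m + 1)) (α' : Fin (m + n + 1) → Fin (n + 1)) : Prop :=
  IsShuffle m n γ γ' ∧ ShuffleLT m n α γ ∧
    ∀ (δ : Fin (m + n + 1) → Fin (m + 1)) (δ' : Fin (m + n + 1) → Fin (n + 1)),
      IsShuffle m n δ δ' → ¬ (ShuffleLT m n α δ ∧ ShuffleLT m n δ γ)

/-- The first component of the maximum `(m,n)`-shuffle: `i ↦ min i m`. -/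
def maxShuffleFst (m n : ℕ) : Fin (m + n + 1) → Fin (m + 1) :=
  fun i => ⟨min (i : ℕ) m, by have := i.isLt; omega⟩

/-- The second component of the maximum `(m,n)`-shuffle: `i ↦ i - min i m`. -/
def maxShuffleSnd (m n : ℕ) : Fin (m + n + 1) → Fin (n + 1) :=
  fun i => ⟨(i : ℕ) - min (i : ℕ) m, by have := i.isLt; omega⟩

/-!
Along a shuffle the values of `α` start at `0`, grow by `0` or `1` at each step, and end at `m`.
An upper-left corner is exactly a step by `0` followed by a step by `1`. Without such corners the
first step by `0` makes `α` constant from then on, so it can only occur once `α` has reached `m`;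
hence `α` climbs at every step until then, which means `α i = min i m`.
-/

/-- Once two consecutive terms of the sequence agree, so do the next two. For a shuffle this
expresses the absence of upper-left corners without reference to the ends of the index range. -/
def StaysFlat {β : Type*} (f : ℕ → β) : Prop :=
  ∀ i, f (i + 1) = f i → f (i + 2) = f (i + 1)

theorem StaysFlat.eq_of_le {β : Type*} {f : ℕ → β} (hf : StaysFlat f) {i j : ℕ}
    (hflat : f (i + 1) = f i) (hij : i ≤ j) : f j = f i := by
  have flat_from : ∀ k, i ≤ k → f (k + 1) = f k := fun k hik =>
    Nat.le_induction hflat (fun k _ hk => hf k hk) k hik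
  induction j, hij using Nat.le_induction with
  | base => rfl
  | succ k hik ih => exact (flat_from k hik).trans ih

section UnitSteps

open Filter

variable {a : ℕ → ℕ} {m : ℕ}

theorem StaysFlat.eq_min (hflat : StaysFlat a) (hzero : a 0 = 0)
    (hstep : ∀ i, a (i + 1) = a i ∨ a (i + 1) = a i + 1) (hlim : ∀ᶠ i in atTop, a i = m) (i : ℕ) :
    a i = min i m := by
  have le_limit : ∀ i, a i ≤ m := fun i => by
    obtain ⟨j, hj, hij⟩ := (hlim.and (eventually_ge_atTop i)).exists
    exact hj ▸ monotone_nat_of_le_succ (fun k => by have := hstep k; omega) hij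
  have eq_limit_of_flat : ∀ i, a (i + 1) = a i → a i = m := fun i hi => by
    obtain ⟨j, hj, hij⟩ := (hlim.and (eventually_ge_atTop i)).exists
    exact (hflat.eq_of_le hi hij).symm.trans hj
  induction i with
  | zero => simpa using hzero
  | succ i ih =>
    have := le_limit (i + 1)
    rcases hstep i with hi | hi
    · have := eq_limit_of_flat i hi
      omega
    · omega

theorem staysFlat_min (m : ℕ) : StaysFlat fun i => min i m := by
  intro i (hi : min (i + 1) m = min i m)
  change min (i + 2) m = min (i + 1) m
  omega

theorem staysFlat_iff_eq_min (hzero : a 0 = 0)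
    (hstep : ∀ i, a (i + 1) = a i ∨ a (i + 1) = a i + 1) (hlim : ∀ᶠ i in atTop, a i = m) :
    StaysFlat a ↔ a = fun i => min i m :=
  ⟨fun hflat => funext (hflat.eq_min hzero hstep hlim), fun ha => ha ▸ staysFlat_min m⟩

end UnitSteps

section ExtendFin

variable {N M : ℕ}

theorem extendFin_val (f : Fin (N + 1) → Fin (M + 1)) (i : Fin (N + 1)) :
    extendFin f i = f i := by
  simp only [extendFin, min_eq_left i.is_le]

theorem extendFin_le (f : Fin (N + 1) → Fin (M + 1)) (i : ℕ) : extendFin f i ≤ M :=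
  Fin.is_le _

theorem monotone_extendFin {f : Fin (N + 1) → Fin (M + 1)} (hf : Monotone f) :
    Monotone (extendFin f) :=
  fun _ _ hij => hf (min_le_min_right N hij)

theorem extendFin_injective :
    Function.Injective (extendFin : (Fin (N + 1) → Fin (M + 1)) → ℕ → ℕ) := by
  intro f g hfg
  ext i
  rw [← extendFin_val f, ← extendFin_val g, hfg]

end ExtendFin

namespace IsShuffle

variable {m n : ℕ} {α : Fin (m + n + 1) → Fin (m + 1)} {α' : Fin (m + n + 1) → Fin (n + 1)}

theorem monotone_fst (h : IsShuffle m n α α') : Monotone α := h.1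

theorem monotone_snd (h : IsShuffle m n α α') : Monotone α' := h.2.1

theorem fst_add_snd (h : IsShuffle m n α α') (i : Fin (m + n + 1)) :
    (α i : ℕ) + (α' i : ℕ) = i := h.2.2.2.2 i

theorem snd_unique {β' : Fin (m + n + 1) → Fin (n + 1)} (h : IsShuffle m n α α')
    (hβ' : IsShuffle m n α β') : α' = β' := by
  ext i
  exact Nat.add_left_cancel ((h.fst_add_snd i).trans (hβ'.fst_add_snd i).symm)

theorem extendFin_add_extendFin (h : IsShuffle m n α α') (i : ℕ) :
    extendFin α i + extendFin α' i = min i (m + n) :=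
  h.fst_add_snd _

theorem extendFin_zero (h : IsShuffle m n α α') : extendFin α 0 = 0 := by
  have := h.extendFin_add_extendFin 0
  omega

theorem extendFin_succ_eq_or (h : IsShuffle m n α α') (i : ℕ) :
    extendFin α (i + 1) = extendFin α i ∨ extendFin α (i + 1) = extendFin α i + 1 := by
  have fst_le := monotone_extendFin h.monotone_fst (Nat.le_add_right i 1)
  have snd_le := monotone_extendFin h.monotone_snd (Nat.le_add_right i 1)
  have sum_i := h.extendFin_add_extendFin i
  have sum_succ := h.extendFin_add_extendFin (i + 1)
  omega

theorem extendFin_eq_of_ge (h : IsShuffle m n α α') {i : ℕ} (hi : m + n ≤ i) :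
    extendFin α i = m := by
  have := h.extendFin_add_extendFin i
  have := extendFin_le α i
  have := extendFin_le α' i
  omega

theorem ulCorner_eq_empty_iff_staysFlat (h : IsShuffle m n α α') :
    ulCorner m n α = ∅ ↔ StaysFlat (extendFin α) := by
  rw [Set.eq_empty_iff_forall_notMem]
  constructor
  · intro no_corner i hflat
    rcases le_or_gt (i + 2) (m + n) with hi | hi
    · exact (h.extendFin_succ_eq_or (i + 1)).resolve_right fun hup =>
        no_corner (i + 1) ⟨Nat.le_add_left 1 i, hi, hup, hflat⟩
    · rw [h.extendFin_eq_of_ge hi.le, h.extendFin_eq_of_ge (Nat.le_of_lt_succ hi)]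
  · rintro hflat i ⟨hpos, -, hup, heq⟩
    obtain ⟨k, rfl⟩ := Nat.exists_eq_add_of_le' hpos
    exact Nat.succ_ne_self _ (hup.symm.trans (hflat k heq))

theorem staysFlat_iff_extendFin_eq_min (h : IsShuffle m n α α') :
    StaysFlat (extendFin α) ↔ extendFin α = fun i => min i m :=
  staysFlat_iff_eq_min h.extendFin_zero h.extendFin_succ_eq_or
    (Filter.eventually_atTop.2 ⟨m + n, fun _ => h.extendFin_eq_of_ge⟩)

theorem le_maxShuffleFst (h : IsShuffle m n α α') : ShuffleLE m n α (maxShuffleFst m n) :=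
  fun i => le_min (h.fst_add_snd i ▸ Nat.le_add_right _ _) (α i).is_le

end IsShuffle

theorem isShuffle_maxShuffle (m n : ℕ) :
    IsShuffle m n (maxShuffleFst m n) (maxShuffleSnd m n) := by
  refine ⟨fun i j hij => min_le_min_right m hij, fun i j hij => ?_, fun k => ?_, fun k => ?_,
    fun i => Nat.add_sub_cancel' (min_le_left _ _)⟩
  · simp only [maxShuffleSnd, Fin.mk_le_mk]
    omega
  · exact ⟨⟨k, by omega⟩, Fin.ext (min_eq_left k.is_le)⟩
  · refine ⟨⟨m + k, by omega⟩, Fin.ext ?_⟩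
    simp only [maxShuffleSnd]
    omega

theorem extendFin_maxShuffleFst (m n : ℕ) :
    extendFin (maxShuffleFst m n) = fun i => min i m := by
  funext i
  simp only [extendFin, maxShuffleFst]
  omega

theorem IsShuffle.eq_maxShuffle_iff {m n : ℕ} {α : Fin (m + n + 1) → Fin (m + 1)}
    {α' : Fin (m + n + 1) → Fin (n + 1)} (h : IsShuffle m n α α') :
    α = maxShuffleFst m n ∧ α' = maxShuffleSnd m n ↔ extendFin α = fun i => min i m := by
  rw [← extendFin_maxShuffleFst m n, extendFin_injective.eq_iff, and_iff_left_iff_imp]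
  rintro rfl
  exact h.snd_unique (isShuffle_maxShuffle m n)

/-- The pair `(i ↦ min i m, i ↦ i - min i m)` is an `(m,n)`-shuffle, it is the
greatest element of the poset of `(m,n)`-shuffles, and a shuffle has empty
upper-left corner set iff it is this maximum shuffle. -/
theorem maxShuffle_spec (m n : ℕ) :
    IsShuffle m n (maxShuffleFst m n) (maxShuffleSnd m n) ∧
    (∀ (α : Fin (m + n + 1) → Fin (m + 1)) (α' : Fin (m + n + 1) → Fin (n + 1)),
      IsShuffle m n α α' → ShuffleLE m n α (maxShuffleFst m n)) ∧
    (∀ (α : Fin (m + n + 1) → Fin (m + 1)) (α' : Fin (m + n + 1) → Fin (n + 1)),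
      IsShuffle m n α α' →
        (ulCorner m n α = ∅ ↔ α = maxShuffleFst m n ∧ α' = maxShuffleSnd m n)) := by
  refine ⟨isShuffle_maxShuffle m n, fun α α' h => h.le_maxShuffleFst, fun α α' h => ?_⟩
  rw [h.ulCorner_eq_empty_iff_staysFlat, h.staysFlat_iff_extendFin_eq_min, h.eq_maxShuffle_iff]
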